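/- arXiv:2102.02554 — 4 statements merged into one kernel-verified Lean document; each statement's English description precedes it below -/
import Mathlib

section
/- The number of n×n matrices over F_q of rank t whose row space equals their column space is exactly ∏_{i=0}^{t-1} (q^n − q^i). -/
open Matrix

lemma aux_span_mul_le {F : Type} [Field F] {l m n : ℕ} (A : Matrix (Fin l) (Fin m) F)
    (B : Matrix (Fin m) (Fin n) F) :
    Submodule.span F (Set.range (A * B)) ≤ Submodule.span F (Set.range B) := by
  rw [Submodule.span_le]
  rintro _ ⟨i, rfl⟩
  have : (A * B) i = ∑ j, A i j • B j := by
    ext k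
    simp [Matrix.mul_apply, Finset.sum_apply]
  rw [this]
  exact Submodule.sum_mem _ fun j _ => Submodule.smul_mem _ _ (Submodule.subset_span ⟨j, rfl⟩)

lemma aux_left_inv {F : Type} [Field F] {t n : ℕ} (B : Matrix (Fin t) (Fin n) F)
    (h : LinearIndependent F B) : ∃ D : Matrix (Fin t) (Fin n) F, D * Bᵀ = 1 := by
  have hinj : Function.Injective (Matrix.toLin' Bᵀ) := by
    have := (Matrix.mulVec_injective_iff (M := Bᵀ)).2 h
    exact this
  obtain ⟨g, hg⟩ := LinearMap.exists_leftInverse_of_injective (Matrix.toLin' Bᵀ)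
    (LinearMap.ker_eq_bot.2 hinj)
  refine ⟨LinearMap.toMatrix' g, ?_⟩
  have := congrArg LinearMap.toMatrix' hg
  rwa [LinearMap.toMatrix'_comp, LinearMap.toMatrix'_toLin', LinearMap.toMatrix'_id] at this

lemma aux_span_mul_eq {F : Type} [Field F] {t n m : ℕ} (B : Matrix (Fin t) (Fin n) F)
    (h : LinearIndependent F B) (S : Matrix (Fin t) (Fin m) F) :
    Submodule.span F (Set.range (Bᵀ * S)) = Submodule.span F (Set.range S) := by
  obtain ⟨D, hD⟩ := aux_left_inv B h
  apply le_antisymm (aux_span_mul_le _ _)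
  have := aux_span_mul_le D (Bᵀ * S)
  rwa [← Matrix.mul_assoc, hD, Matrix.one_mul] at this

lemma aux_cancel {F : Type} [Field F] {t n m : ℕ} (B : Matrix (Fin t) (Fin n) F)
    (h : LinearIndependent F B) (S S' : Matrix (Fin t) (Fin m) F)
    (hS : Bᵀ * S = Bᵀ * S') : S = S' := by
  obtain ⟨D, hD⟩ := aux_left_inv B h
  rw [← Matrix.one_mul S, ← Matrix.one_mul S', ← hD, Matrix.mul_assoc, Matrix.mul_assoc, hS]

lemma aux_exists_factor {F : Type} [Field F] {l t n : ℕ} (B : Matrix (Fin t) (Fin n) F)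
    (A : Matrix (Fin l) (Fin n) F)
    (h : Submodule.span F (Set.range A) ≤ Submodule.span F (Set.range B)) :
    ∃ S : Matrix (Fin l) (Fin t) F, A = S * B := by
  have : ∀ i, ∃ c : Fin t → F, ∑ j, c j • B j = A i := fun i =>
    (Submodule.mem_span_range_iff_exists_fun F).1 (h (Submodule.subset_span ⟨i, rfl⟩))
  choose S hS using this
  refine ⟨S, ?_⟩
  ext i k
  rw [← hS i]
  simp only [Finset.sum_apply, Pi.smul_apply, smul_eq_mul]
  rfl

lemma aux_basis {F : Type} [Field F] {n t : ℕ} (W : Submodule F (Fin n → F)) :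
    ∃ B : Matrix (Fin t) (Fin n) F, Module.finrank F W = t →
      LinearIndependent F B ∧ Submodule.span F (Set.range B) = W := by
  by_cases h : Module.finrank F W = t
  · let b := Module.finBasisOfFinrankEq F W h
    refine ⟨fun i => (b i : Fin n → F), fun _ => ⟨?_, ?_⟩⟩
    · exact b.linearIndependent.map' W.subtype (Submodule.ker_subtype W)
    · have h2 := congrArg (Submodule.map W.subtype) b.span_eq
      rw [Submodule.map_span, Submodule.map_subtype_top, ← Set.range_comp] at h2
      exact h2
  · exact ⟨0, fun h' => absurd h' h⟩

/-- **Number of space-symmetric matrices.**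
The number of `n × n` matrices over the finite field `F` with `q` elements that have
rank `t` and whose row space (span of the rows) equals their column space
(span of the columns) is exactly `∏_{i=0}^{t-1} (q^n − q^i)`. -/
theorem number_of_space_symmetric_matrices
    (q n t : ℕ) (F : Type) [Field F] [Fintype F]
    (hq : Fintype.card F = q) (ht : t ≤ n) :
    Nat.card {E : Matrix (Fin n) (Fin n) F //
        E.rank = t ∧
        Submodule.span F (Set.range E) = Submodule.span F (Set.range Eᵀ)} =
      ∏ i ∈ Finset.range t, (q ^ n - q ^ i) := by
  have hcard := card_linearIndependent (K := F) (V := Fin n → F) (k := t) (by simpa using ht)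
  rw [Module.finrank_fin_fun, hq] at hcard
  rw [Finset.prod_range, ← hcard]
  symm
  choose B hB using fun W : Submodule F (Fin n → F) => aux_basis (t := t) W
  have hrank : ∀ E : Matrix (Fin n) (Fin n) F,
      E.rank = Module.finrank F (Submodule.span F (Set.range E)) := fun E =>
    E.rank_eq_finrank_span_row
  have hfr : ∀ s : Matrix (Fin t) (Fin n) F, LinearIndependent F s →
      Module.finrank F (Submodule.span F (Set.range s)) = t := fun s hs => by
    simpa using finrank_span_eq_card hs
  have hrow : ∀ s : Matrix (Fin t) (Fin n) F, LinearIndependent F s →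
      Submodule.span F (Set.range ((B (Submodule.span F (Set.range s)))ᵀ * s)) =
        Submodule.span F (Set.range s) := fun s hs =>
    aux_span_mul_eq _ (hB _ (hfr s hs)).1 s
  let φ : {s : Fin t → (Fin n → F) // LinearIndependent F s} →
      {E : Matrix (Fin n) (Fin n) F // E.rank = t ∧
        Submodule.span F (Set.range E) = Submodule.span F (Set.range Eᵀ)} := fun s =>
    ⟨(B (Submodule.span F (Set.range s.1)))ᵀ * (show Matrix (Fin t) (Fin n) F from s.1), by
      refine ⟨?_, ?_⟩
      · rw [hrank]
        exact (congrArg (fun W : Submodule F (Fin n → F) => Module.finrank F W)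
          (hrow s.1 s.2)).trans (hfr s.1 s.2)
      · refine (hrow s.1 s.2).trans ?_
        rw [Matrix.transpose_mul, Matrix.transpose_transpose]
        exact ((aux_span_mul_eq _ s.2 _).trans (hB _ (hfr s.1 s.2)).2).symm⟩
  apply Nat.card_eq_of_bijective φ
  constructor
  · rintro ⟨s, hs⟩ ⟨s', hs'⟩ h
    have h1 : (B (Submodule.span F (Set.range s)))ᵀ * (show Matrix (Fin t) (Fin n) F from s) =
      (B (Submodule.span F (Set.range s')))ᵀ * (show Matrix (Fin t) (Fin n) F from s') :=
      congrArg Subtype.val h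
    have h2 : Submodule.span F (Set.range s) = Submodule.span F (Set.range s') := by
      refine (hrow s hs).symm.trans (Eq.trans ?_ (hrow s' hs'))
      exact congrArg (fun M : Matrix (Fin n) (Fin n) F => Submodule.span F (Set.range M)) h1
    rw [← h2] at h1
    exact Subtype.ext (aux_cancel _ (hB _ (hfr s hs)).1 _ _ h1)
  · rintro ⟨E, hE, hsym⟩
    have hW : Module.finrank F (Submodule.span F (Set.range E)) = t := (hrank E).symm.trans hE
    obtain ⟨hli, hsp⟩ := hB _ hW
    obtain ⟨S, hS⟩ := aux_exists_factor (B (Submodule.span F (Set.range E))) Eᵀ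
      (by rw [hsp, hsym])
    have hE' : E = (B (Submodule.span F (Set.range E)))ᵀ * Sᵀ := by
      rw [← Matrix.transpose_mul, ← hS, Matrix.transpose_transpose]
    have hspan : Submodule.span F (Set.range Sᵀ) = Submodule.span F (Set.range E) := by
      have := aux_span_mul_eq _ hli Sᵀ
      rw [← hE'] at this
      exact this.symm
    have hSli : LinearIndependent F (show Fin t → Fin n → F from Sᵀ) := by
      rw [linearIndependent_iff_card_eq_finrank_span, Fintype.card_fin]
      exact (((congrArg (fun W : Submodule F (Fin n → F) => Module.finrank F W)
          hspan)).trans hW).symm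
    refine ⟨⟨Sᵀ, hSli⟩, Subtype.ext ?_⟩
    change (B (Submodule.span F (Set.range Sᵀ)))ᵀ * Sᵀ = E
    rw [hspan]
    exact hE'.symm
end

section
/- If E is an n×n matrix over F_q of rank t whose row space equals its column space, then there exist a matrix A ∈ F_q^{n×t} of rank t and an invertible matrix P ∈ F_q^{t×t} such that E = A·P·Aᵀ. -/
open Matrix

/-- If `E` is an `n × n` matrix over `F_q` of rank `t` whose row space equals its
column space (a space-symmetric matrix), then `E = A * P * Aᵀ` for some full-rank
`A ∈ F_q^{n×t}` and some invertible `P ∈ F_q^{t×t}`. -/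
theorem space_symmetric_decomposition
    (q n t : ℕ) (F : Type) [Field F] [Fintype F]
    (hq : Fintype.card F = q)
    (E : Matrix (Fin n) (Fin n) F) (hrank : E.rank = t)
    (hspsym : Submodule.span F (Set.range E) = Submodule.span F (Set.range Eᵀ)) :
    ∃ (A : Matrix (Fin n) (Fin t) F) (P : Matrix (Fin t) (Fin t) F),
      A.rank = t ∧ IsUnit P ∧ E = A * P * Aᵀ := by
  classical
  have hfr : Module.finrank F (Submodule.span F (Set.range E)) = t := by
    rw [← hrank, Matrix.rank_eq_finrank_span_row]
    rfl
  let b : Module.Basis (Fin t) F (Submodule.span F (Set.range E)) :=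
    Module.finBasisOfFinrankEq F _ hfr
  let A : Matrix (Fin n) (Fin t) F := Matrix.of fun i k => (b k : Fin n → F) i
  have hrow : ∀ i, E i ∈ Submodule.span F (Set.range E) :=
    fun i => Submodule.subset_span ⟨i, rfl⟩
  have hcol : ∀ j, Eᵀ j ∈ Submodule.span F (Set.range E) :=
    fun j => by rw [hspsym]; exact Submodule.subset_span ⟨j, rfl⟩
  let C : Matrix (Fin t) (Fin n) F := Matrix.of fun k j => b.repr ⟨Eᵀ j, hcol j⟩ k
  let D : Matrix (Fin n) (Fin t) F := Matrix.of fun i k => b.repr ⟨E i, hrow i⟩ k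
  have key : ∀ (v : Submodule.span F (Set.range E)) (i : Fin n),
      ∑ k, b.repr v k * (b k : Fin n → F) i = (v : Fin n → F) i := by
    intro v i
    have h := congrArg (fun w : Submodule.span F (Set.range E) => (w : Fin n → F) i)
      (b.sum_repr v)
    simpa [-Module.Basis.sum_repr, Finset.sum_apply] using h
  have hC : E = A * C := by
    ext i j
    have h := key ⟨Eᵀ j, hcol j⟩ i
    simp only [Matrix.mul_apply, A, C, Matrix.of_apply]
    simp only [mul_comm ((b _ : Fin n → F) i)]
    exact h.symm
  have hD : E = D * Aᵀ := by
    ext i j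
    have h := key ⟨E i, hrow i⟩ j
    simp only [Matrix.mul_apply, A, D, Matrix.of_apply, Matrix.transpose_apply]
    exact h.symm
  have hli : LinearIndependent F Aᵀ :=
    b.linearIndependent.map' (Submodule.subtype _) (Submodule.ker_subtype _)
  have hinj : Function.Injective A.mulVec := Matrix.mulVec_injective_iff.mpr hli
  obtain ⟨g, hg⟩ := LinearMap.exists_leftInverse_of_injective A.mulVecLin
    (LinearMap.ker_eq_bot.mpr hinj)
  have hL : LinearMap.toMatrix' g * A = 1 := by
    rw [← LinearMap.toMatrix'_id, ← hg, LinearMap.toMatrix'_comp, ← Matrix.toLin'_apply',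
      LinearMap.toMatrix'_toLin']
  have hE : E = A * (LinearMap.toMatrix' g * D) * Aᵀ := by
    calc E = A * ((LinearMap.toMatrix' g * A) * C) := by rw [hL, Matrix.one_mul]; exact hC
      _ = A * (LinearMap.toMatrix' g * E) := by rw [Matrix.mul_assoc, ← hC]
      _ = A * (LinearMap.toMatrix' g * (D * Aᵀ)) := by rw [← hD]
      _ = _ := by simp only [Matrix.mul_assoc]
  refine ⟨A, LinearMap.toMatrix' g * D, ?_, ?_, hE⟩
  · rw [← Matrix.rank_transpose]
    exact hli.rank_matrix.trans (Fintype.card_fin t)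
  · have hr : t ≤ (LinearMap.toMatrix' g * D).rank := by
      calc t = (A * (LinearMap.toMatrix' g * D) * Aᵀ).rank := by rw [← hE, hrank]
        _ ≤ (A * (LinearMap.toMatrix' g * D)).rank := Matrix.rank_mul_le_left _ _
        _ ≤ _ := Matrix.rank_mul_le_right _ _
    have hr' : (LinearMap.toMatrix' g * D).rank = t := le_antisymm (Matrix.rank_le_width _) hr
    rw [← Matrix.mulVec_surjective_iff_isUnit]
    have : LinearMap.range (LinearMap.toMatrix' g * D).mulVecLin = ⊤ := by
      apply Submodule.eq_top_of_finrank_eq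
      rw [Module.finrank_fin_fun]
      exact hr'
    exact LinearMap.range_eq_top.mp this
end

section
/- (Key equation.) Let t ≥ 1, let a_0,…,a_{t−1} ∈ F_{q^n} and d_0,…,d_{t−1} ∈ F_{q^n}, and define the syndrome values s_p := Σ_{l=0}^{t−1} a_l · d_l^{q^p} for all integers p ≥ 0. Suppose Γ_0,…,Γ_t ∈ F_{q^n} satisfy Σ_{j=0}^{t} Γ_j · a_l^{q^j} = 0 for every l ∈ {0,…,t−1} (i.e., the linearized polynomial Γ(x) = Σ_j Γ_j x^{q^j} vanishes on each a_l). Then for every integer p ≥ t, Σ_{j=0}^{t} Γ_j · (s_{p−j})^{q^j} = 0; equivalently, Γ(s(x)) ≡ Ω(x) mod x^{q^{n−k}} for a linearized polynomial Ω of q-degree less than t whenever the syndrome polynomial s(x) = Σ_{p=0}^{n−k−1} s_p x^{q^p} is built from such s_p. -/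
open Matrix

/-- **Key equation.** Let `a_l, d_l ∈ F_{q^n}` for `l < t` and define the syndromes
`s p = ∑ l, a l * d l ^ q ^ p`. If the linearized polynomial with coefficients
`Γ_0, …, Γ_t` vanishes on each `a l`, i.e. `∑ j, Γ j * a l ^ q ^ j = 0`, then
for every `p ≥ t` we have `∑_{j=0}^{t} Γ j * (s (p − j)) ^ q ^ j = 0`; that is,
`Γ(s(x)) ≡ Ω(x) mod x^{q^{n−k}}` with `deg_q Ω < t`. -/
theorem key_equation
    (q n t : ℕ) (F K : Type) [Field F] [Fintype F] [Field K] [Fintype K] [Algebra F K]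
    (hq : Fintype.card F = q) (hK : Fintype.card K = q ^ n)
    (ht : 1 ≤ t) (a d : Fin t → K) (Γ : Fin (t + 1) → K)
    (hΓ : ∀ l, ∑ j, Γ j * a l ^ q ^ (j : ℕ) = 0)
    (s : ℕ → K) (hs : ∀ p, s p = ∑ l, a l * d l ^ q ^ p) :
    ∀ p, t ≤ p → ∑ j : Fin (t + 1), Γ j * s (p - (j : ℕ)) ^ q ^ (j : ℕ) = 0 := by
  intro p hp
  obtain ⟨c, hchar⟩ := CharP.exists F
  obtain ⟨m, hc, hcard⟩ := FiniteField.card F c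
  haveI : Fact c.Prime := ⟨hc⟩
  haveI : CharP K c := charP_of_injective_algebraMap (algebraMap F K).injective c
  have hqc : q = c ^ (m : ℕ) := hq.symm.trans hcard
  have key : ∀ j : Fin (t + 1), Γ j * s (p - (j : ℕ)) ^ q ^ (j : ℕ)
      = ∑ l, (Γ j * a l ^ q ^ (j : ℕ)) * d l ^ q ^ p := by
    intro j
    have hj : p - (j : ℕ) + j = p := by omega
    have hadd : (∑ l, a l * d l ^ q ^ (p - (j : ℕ))) ^ q ^ (j : ℕ)
        = ∑ l, (a l * d l ^ q ^ (p - (j : ℕ))) ^ q ^ (j : ℕ) := by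
      rw [show q ^ (j : ℕ) = c ^ ((m : ℕ) * j) by rw [hqc, pow_mul]]
      exact sum_pow_char_pow c _ _ _
    rw [hs, hadd, Finset.mul_sum]
    refine Finset.sum_congr rfl fun l _ => ?_
    rw [mul_pow, ← pow_mul, ← pow_add, hj, mul_assoc]
  rw [Finset.sum_congr rfl fun j _ => key j, Finset.sum_comm]
  refine Finset.sum_eq_zero fun l _ => ?_
  rw [← Finset.sum_mul, hΓ l, zero_mul]
end

section
/- Let a = (a_1,…,a_t) ∈ F_{q^n}^t, let P ∈ F_q^{t×t}, let r ≥ 0 be an integer shift, and set b̂ = a·Pᵀ ∈ F_{q^n}^t. Define syndrome values s_p := Σ_{l=1}^{t} a_l (b̂_l)^{q^{r+p}} for p ≥ 0, and let S be the (n−k−t)×(t+1) matrix with (i,j) entry (s_{t+i−j})^{q^j} for 0 ≤ i ≤ n−k−t−1 and 0 ≤ j ≤ t, where t ≤ n−k. Then S factors as S = M_{n−k−t}(a)^{[t+r]} · Pᵀ · M_{t+1}(a)ᵀ. In particular, taking r = 1 with b̂ = a·Pᵀ replaced by ĉ = a·P gives S^{(1)} = M_{n−k−t}(a)^{[t+1]}·P·M_{t+1}(a)ᵀ,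 and taking r = k gives S^{(2)} = M_{n−k−t}(a)^{[t+k]}·Pᵀ·M_{t+1}(a)ᵀ. -/
open Matrix

theorem exists_frobenius_pow (q : ℕ) (F K : Type) [Field F] [Fintype F] [Field K] [Algebra F K]
    (hq : Fintype.card F = q) (e : ℕ) : ∃ φ : K →ₐ[F] K, ∀ x, φ x = x ^ q ^ e := by
  induction e with
  | zero => exact ⟨AlgHom.id F K, fun x => by simp⟩
  | succ e ih =>
    obtain ⟨φ, hφ⟩ := ih
    refine ⟨(FiniteField.frobeniusAlgHom F K).comp φ, fun x => ?_⟩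
    rw [AlgHom.comp_apply, hφ, FiniteField.coe_frobeniusAlgHom, hq]
    beta_reduce
    rw [← pow_mul, ← pow_succ]

/-- Let `a ∈ F_{q^n}^t`, `P ∈ F_q^{t×t}`, `r ≥ 0`, `bhat = a · Pᵀ`, and define
syndromes `s p = ∑ l, a l * bhat l ^ q ^ (r + p)`. Then the
`(n−k−t) × (t+1)` syndrome matrix `S` with entries `S i j = (s (t + i − j)) ^ q ^ j`
factors as `S = M_{n−k−t}(a)^{[t+r]} · Pᵀ · M_{t+1}(a)ᵀ`. Taking `r = 1` (with `P`
replaced by `Pᵀ`) and `r = k` give the factorizations of `S⁽¹⁾` and `S⁽²⁾`. -/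
theorem syndrome_matrix_factorization
    (q n k t : ℕ) (F K : Type) [Field F] [Fintype F] [Field K] [Fintype K] [Algebra F K]
    (hq : Fintype.card F = q) (hK : Fintype.card K = q ^ n)
    (ht : t ≤ n - k)
    (a : Fin t → K) (P : Matrix (Fin t) (Fin t) F) (r : ℕ)
    (bhat : Fin t → K)
    (hbhat : ∀ l, bhat l = ∑ m, a m * algebraMap F K (Pᵀ m l))
    (s : ℕ → K) (hs : ∀ p, s p = ∑ l, a l * bhat l ^ q ^ (r + p))
    (S : Matrix (Fin (n - k - t)) (Fin (t + 1)) K)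
    (hS : ∀ i j, S i j = s (t + (i : ℕ) - (j : ℕ)) ^ q ^ (j : ℕ)) :
    S = (Matrix.of fun (i : Fin (n - k - t)) (m : Fin t) => a m ^ q ^ (t + r + (i : ℕ))) *
        (P.map (algebraMap F K))ᵀ *
        (Matrix.of fun (j : Fin (t + 1)) (m : Fin t) => a m ^ q ^ (j : ℕ))ᵀ := by
  ext i j
  obtain ⟨φ, hφ⟩ := exists_frobenius_pow q F K hq j
  obtain ⟨ψ, hψ⟩ := exists_frobenius_pow q F K hq (t + r + (i : ℕ))
  have hj : (j : ℕ) ≤ t := Nat.lt_succ_iff.mp j.isLt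
  rw [hS, hs, ← hφ, map_sum, Matrix.mul_apply]
  refine Finset.sum_congr rfl fun l _ => ?_
  rw [map_mul, hφ, hφ, ← pow_mul, ← pow_add,
    show r + (t + (i : ℕ) - (j : ℕ)) + (j : ℕ) = t + r + (i : ℕ) by omega, ← hψ (bhat l),
    hbhat, map_sum, Matrix.mul_apply, mul_comm]
  simp only [map_mul, AlgHom.commutes]
  simp only [hψ, Matrix.transpose_apply, Matrix.of_apply,
    Matrix.map_apply]
end
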